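/- arXiv:2412.04328 — 3 statements merged into one kernel-verified Lean document; each statement's English description precedes it below -/
import Mathlib

section
/- For ε > 0, let β(ε) denote the unique β > e^{−1} with 1 − β − (1/(2e))·(log β)² = 1 − 3/(2e) − ε; set z(β) = e·β + log β and 𝒮(β) = β·(z(β) + z(β)·exp(−z(β)) + 2·exp(−z(β)) − 2). Then 𝒮(β(ε)) = (4·e^{1/2}/3)·ε^{3/2} + O(ε²) as ε → 0+. -/
open Real Filter Set Topology Asymptotics

noncomputable def zOf (β : ℝ) : ℝ := Real.exp 1 * β + Real.log β

noncomputable def SFluid (β : ℝ) : ℝ :=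
  β * (zOf β + zOf β * Real.exp (-(zOf β)) + 2 * Real.exp (-(zOf β)) - 2)

/-- Quartic remainder for the bracket of the surplus. -/
lemma bracket_bound (z : ℝ) (h0 : 0 ≤ z) (h1 : z ≤ 1) :
    |z + z * Real.exp (-z) + 2 * Real.exp (-z) - 2 - z ^ 3 / 6| ≤ z ^ 4 := by
  have h := Real.exp_bound (x := -z) (by rw [abs_neg, abs_of_nonneg h0]; exact h1)
    (n := 4) (by norm_num)
  rw [abs_neg, abs_of_nonneg h0] at h
  norm_num [Finset.sum_range_succ, Nat.factorial] at h
  obtain ⟨r, hr⟩ : ∃ r, r = Real.exp (-z) - (1 - z + z ^ 2 / 2 - z ^ 3 / 6) := ⟨_, rfl⟩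
  have hr' : |r| ≤ z ^ 4 * (5 / 96) := by
    rw [hr]; refine le_trans (le_of_eq ?_) h; congr 1; ring
  have he : Real.exp (-z) = r + (1 - z + z ^ 2 / 2 - z ^ 3 / 6) := by rw [hr]; ring
  rw [he]
  have hz4 : 0 ≤ z ^ 4 := by positivity
  obtain ⟨ha, hb⟩ := abs_le.mp hr'
  have e1 : z + z * (r + (1 - z + z ^ 2 / 2 - z ^ 3 / 6))
      + 2 * (r + (1 - z + z ^ 2 / 2 - z ^ 3 / 6)) - 2 - z ^ 3 / 6
      = (z + 2) * r - z ^ 4 / 6 := by ring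
  rw [e1, abs_le]
  have h2 : |(z + 2) * r| ≤ 3 * (z ^ 4 * (5 / 96)) := by
    rw [abs_mul, abs_of_nonneg (by linarith : 0 ≤ z + 2)]
    exact mul_le_mul (by linarith) hr' (abs_nonneg _) (by norm_num)
  obtain ⟨hc, hd⟩ := abs_le.mp h2
  constructor <;> linarith

/-- The estimate in terms of `u = 1 + log β` and `s = √(e ε)`. -/
lemma core_bound (u s : ℝ) (hu : 0 < u) (hs : 0 < s) (hs1 : s ≤ 1 / 3)
    (h : s ^ 2 = Real.exp u - 1 - u + u ^ 2 / 2) :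
    |Real.exp u * ((Real.exp u + u - 1) + (Real.exp u + u - 1) * Real.exp (-(Real.exp u + u - 1))
      + 2 * Real.exp (-(Real.exp u + u - 1)) - 2) - 4 / 3 * s ^ 3| ≤ 400 * s ^ 4 := by
  have hq := Real.quadratic_le_exp_of_nonneg hu.le
  have hus : u ≤ s := by nlinarith
  have hu1 : u ≤ 1 / 3 := hus.trans hs1
  have h3 := Real.exp_bound (x := u) (by rw [abs_of_pos hu]; linarith) (n := 3) (by norm_num)
  rw [abs_of_pos hu] at h3
  norm_num [Finset.sum_range_succ, Nat.factorial] at h3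
  have hE := (abs_le.mp h3).2
  have hu3 : 0 < u ^ 3 := by positivity
  have hu4 : 0 < u ^ 4 := by positivity
  have hE3 : Real.exp u ≤ 1 + u + u ^ 2 / 2 + u ^ 3 := by linarith
  have hsu : s - u ≤ u ^ 2 := by
    have : (s - u) * (s + u) ≤ u ^ 2 * (s + u) := by nlinarith [mul_pos hs (pow_pos hu 2)]
    exact le_of_mul_le_mul_right this (by linarith)
  have hu2s : u ^ 2 ≤ s ^ 2 := by gcongr
  have hu4s : u ^ 4 ≤ s ^ 4 := by gcongr
  have hc1 : u ^ 3 ≤ s ^ 3 := by gcongr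
  have hc2 : s ^ 3 - u ^ 3 ≤ 3 * s ^ 4 := by
    have e : s ^ 3 - u ^ 3 = (s - u) * (s ^ 2 + s * u + u ^ 2) := by ring
    have a : s ^ 2 + s * u + u ^ 2 ≤ 3 * s ^ 2 := by nlinarith
    rw [e]
    calc (s - u) * (s ^ 2 + s * u + u ^ 2) ≤ s ^ 2 * (3 * s ^ 2) :=
          mul_le_mul (by linarith) a (by positivity) (by positivity)
      _ = 3 * s ^ 4 := by ring
  obtain ⟨d, hd⟩ : ∃ d, d = Real.exp u - 1 - u := ⟨_, rfl⟩
  have hd0 : 0 ≤ d := by nlinarith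
  have hd1 : d ≤ u ^ 2 := by nlinarith [pow_pos hu 2]
  have hz : Real.exp u + u - 1 = 2 * u + d := by rw [hd]; ring
  have hEd : Real.exp u = 1 + u + d := by rw [hd]; ring
  rw [hz, hEd]
  have hdu : d ≤ u := by nlinarith
  have hF := bracket_bound (2 * u + d) (by linarith) (by nlinarith)
  generalize (2 * u + d) + (2 * u + d) * Real.exp (-(2 * u + d))
      + 2 * Real.exp (-(2 * u + d)) - 2 = F at hF ⊢
  have hz4 : (2 * u + d) ^ 4 ≤ 81 * u ^ 4 := by
    calc (2 * u + d) ^ 4 ≤ (3 * u) ^ 4 := by gcongr; linarith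
      _ = _ := by ring
  have hz3a : 8 * u ^ 3 ≤ (2 * u + d) ^ 3 := by
    calc 8 * u ^ 3 = (2 * u) ^ 3 := by ring
      _ ≤ _ := by gcongr; linarith
  have hz3b : (2 * u + d) ^ 3 ≤ 8 * u ^ 3 + 19 * u ^ 4 := by
    have a1 : u ^ 2 * d ≤ u ^ 2 * u ^ 2 := by gcongr
    have a2 : u * d * d ≤ u * u * u ^ 2 := by gcongr
    have a3 : d * d * d ≤ u * u * u ^ 2 := by gcongr
    nlinarith
  obtain ⟨f1, f2⟩ := abs_le.mp hF
  have g : |F - 4 / 3 * u ^ 3| ≤ 85 * u ^ 4 := by rw [abs_le]; constructor <;> linarith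
  have e : (1 + u + d) * F - 4 / 3 * s ^ 3 = (1 + u + d) * (F - 4 / 3 * u ^ 3)
      + ((u + d) * (4 / 3 * u ^ 3) - 4 / 3 * (s ^ 3 - u ^ 3)) := by ring
  have k1 : |(1 + u + d) * (F - 4 / 3 * u ^ 3)| ≤ 3 * (85 * u ^ 4) := by
    rw [abs_mul, abs_of_nonneg (by linarith : 0 ≤ 1 + u + d)]
    exact mul_le_mul (by linarith) g (abs_nonneg _) (by norm_num)
  have k2 : (u + d) * (4 / 3 * u ^ 3) ≤ (2 * u) * (4 / 3 * u ^ 3) := by gcongr; linarith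
  have k3 : 0 ≤ (u + d) * (4 / 3 * u ^ 3) := by positivity
  have k4 : (2 * u) * (4 / 3 * u ^ 3) = 8 / 3 * u ^ 4 := by ring
  obtain ⟨m1, m2⟩ := abs_le.mp k1
  rw [e, abs_le]
  constructor <;> linarith

/-- For `ε > 0` let `B ε` be the unique `β > e⁻¹` with
`1 - β - (1/(2e)) (log β)² = 1 - 3/(2e) - ε`. With `z β = e β + log β` and
`𝒮 β = β (z β + z β exp(-z β) + 2 exp(-z β) - 2)`, one has
`𝒮 (B ε) = (4 e^{1/2}/3) ε^{3/2} + O(ε²)` as `ε → 0⁺`. -/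
theorem karpSipser_surplus_asymptotic_at_extinction (B : ℝ → ℝ)
    (hB : ∀ ε : ℝ, 0 < ε →
      (Real.exp 1)⁻¹ < B ε ∧
        1 - B ε - 1 / (2 * Real.exp 1) * (Real.log (B ε)) ^ 2
          = 1 - 3 / (2 * Real.exp 1) - ε) :
    (fun ε : ℝ => SFluid (B ε) - 4 * Real.exp (1 / 2) / 3 * (ε * Real.sqrt ε))
      =O[𝓝[>] (0 : ℝ)] (fun ε : ℝ => ε ^ 2) := by
  have hE : 0 < Real.exp 1 := Real.exp_pos 1
  refine IsBigO.of_bound (400 * Real.exp 1) ?_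
  have hδ : (0 : ℝ) < 1 / (9 * Real.exp 1) := by positivity
  filter_upwards [Ioo_mem_nhdsGT hδ] with ε hε
  obtain ⟨h0, h1⟩ := hε
  obtain ⟨hb, heq⟩ := hB ε h0
  have hbpos : 0 < B ε := (inv_pos.mpr hE).trans hb
  obtain ⟨u, hu⟩ : ∃ u, u = 1 + Real.log (B ε) := ⟨_, rfl⟩
  have hlog : Real.log (B ε) = u - 1 := by rw [hu]; ring
  have hu0 : 0 < u := by
    have := Real.log_lt_log (inv_pos.mpr hE) hb
    rw [Real.log_inv, Real.log_exp] at this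
    linarith
  have hexp : Real.exp u = Real.exp 1 * B ε := by
    rw [hu, Real.exp_add, Real.exp_log hbpos]
  have hB' : B ε = Real.exp u / Real.exp 1 := by rw [hexp]; field_simp
  obtain ⟨s, hsdef⟩ : ∃ s, s = Real.exp (1 / 2) * Real.sqrt ε := ⟨_, rfl⟩
  have hs0 : 0 < s := by rw [hsdef]; exact mul_pos (Real.exp_pos _) (Real.sqrt_pos.mpr h0)
  have hhalf : Real.exp (1 / 2) ^ 2 = Real.exp 1 := by
    rw [← Real.exp_nat_mul]; norm_num
  have hs2 : s ^ 2 = Real.exp 1 * ε := by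
    rw [hsdef, mul_pow, hhalf, Real.sq_sqrt h0.le]
  have hs1 : s ≤ 1 / 3 := by
    rw [lt_div_iff₀ (by positivity)] at h1
    nlinarith
  have hrel : s ^ 2 = Real.exp u - 1 - u + u ^ 2 / 2 := by
    rw [hs2, hexp]
    rw [hlog] at heq
    field_simp at heq
    linarith
  have hc := core_bound u s hu0 hs0 hs1 hrel
  have hz : zOf (B ε) = Real.exp u + u - 1 := by
    rw [zOf, ← hexp, hlog]; ring
  have hs3 : s ^ 3 = Real.exp 1 * (Real.exp (1 / 2) * (ε * Real.sqrt ε)) := by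
    rw [pow_succ, hs2, hsdef]; ring
  have hs4 : s ^ 4 = Real.exp 1 * (Real.exp 1 * ε ^ 2) := by
    rw [show s ^ 4 = (s ^ 2) ^ 2 by ring, hs2]; ring
  rw [hs3, hs4] at hc
  rw [Real.norm_eq_abs, Real.norm_eq_abs, abs_of_nonneg (sq_nonneg ε)]
  refine le_of_mul_le_mul_left ?_ hE
  rw [SFluid, hz]
  nth_rewrite 1 [← abs_of_pos hE]
  rw [← abs_mul]
  refine le_trans (le_of_eq ?_) (hc.trans (le_of_eq ?_))
  · congr 1
    rw [hexp]; ring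
  · ring
end

section
/- For ε > 0, let β(ε) denote the unique β > e^{−1} with 1 − β − (1/(2e))·(log β)² = 1 − 3/(2e) − ε; set z(β) = e·β + log β, 𝒳(β) = e^{−1}·z(β)² − z(β)·β·(1 − exp(−z(β))), 𝒱(β) = β·exp(−z(β))·(exp(z(β)) − z(β) − 1), and 𝒮(β) = β·(z(β) + z(β)·exp(−z(β)) + 2·exp(−z(β)) − 2). Then there exists ε₀ > 0 such that the maps ε ↦ 𝒳(β(ε)), ε ↦ 𝒱(β(ε)), and ε ↦ 𝒮(β(ε)) are twice differentiable on (0, ε₀), the second derivative of ε ↦ 𝒳(β(ε)) is O(1) as ε → 0+, and the second derivatives of ε ↦ 𝒱(β(ε)) and of ε ↦ 𝒮(β(ε)) are both O(ε^{−1/2}) as ε → 0+. -/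
open Real Filter Set Topology Asymptotics

noncomputable def XFluid (β : ℝ) : ℝ :=
  (Real.exp 1)⁻¹ * (zOf β) ^ 2 - zOf β * β * (1 - Real.exp (-(zOf β)))

noncomputable def VFluid (β : ℝ) : ℝ :=
  β * Real.exp (-(zOf β)) * (Real.exp (zOf β) - zOf β - 1)

/-- The entire function `(1 - exp (-z)) / z`. -/
noncomputable def hAux : ℝ → ℝ := dslope (fun z : ℝ => 1 - Real.exp (-z)) 0

noncomputable def ZAux (s : ℝ) : ℝ := Real.exp s + s - 1

lemma hAux_analytic (z : ℝ) : AnalyticAt ℝ hAux z := by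
  have hf : ∀ z : ℝ, AnalyticAt ℝ (fun z : ℝ => 1 - Real.exp (-z)) z := by
    intro z
    fun_prop
  by_cases hz : z = 0
  · subst hz
    obtain ⟨p, hp⟩ := hf 0
    exact hp.has_fpower_series_dslope_fslope.analyticAt
  · have h1 : AnalyticAt ℝ (fun z : ℝ => (1 - Real.exp (-z)) / z) z :=
      (hf z).div analyticAt_id hz
    refine h1.congr ?_
    filter_upwards [isOpen_ne.mem_nhds hz] with w hw
    rw [hAux, dslope_of_ne _ hw, slope_def_field]
    simp

lemma hAux_mul (z : ℝ) : z * hAux z = 1 - Real.exp (-z) := by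
  have := sub_smul_dslope (fun z : ℝ => 1 - Real.exp (-z)) 0 z
  simpa [hAux] using this

lemma hAux_deriv_rel (z : ℝ) : hAux z + z * deriv hAux z = Real.exp (-z) := by
  have h1 : HasDerivAt (fun z => z * hAux z) (1 * hAux z + z * deriv hAux z) z :=
    (hasDerivAt_id z).mul (hAux_analytic z).differentiableAt.hasDerivAt
  have h2 : HasDerivAt (fun z : ℝ => 1 - Real.exp (-z)) (-(Real.exp (-z) * (-1))) z :=
    ((hasDerivAt_neg z).exp).const_sub 1
  have h3 : (fun z => z * hAux z) = fun z : ℝ => 1 - Real.exp (-z) := funext hAux_mul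
  rw [h3] at h1
  have := h1.unique h2
  linarith

lemma hAux_zero : hAux 0 = 1 := by
  simpa using hAux_deriv_rel 0

lemma deriv_hAux_zero : deriv hAux 0 = -1 / 2 := by
  have h0 := (hAux_analytic 0).differentiableAt.hasDerivAt
  have h00 := (hAux_analytic 0).deriv.differentiableAt.hasDerivAt
  have h1 := h0.add ((hasDerivAt_id (0 : ℝ)).mul h00)
  have h2 : HasDerivAt (fun z : ℝ => Real.exp (-z)) (Real.exp (-0) * (-1)) 0 :=
    (hasDerivAt_neg (0 : ℝ)).exp
  have h3 : (hAux + id * deriv hAux) = fun z : ℝ => Real.exp (-z) := funext hAux_deriv_rel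
  rw [h3] at h1
  have := h1.unique h2
  simp at this
  linarith

lemma ZAux_hasDerivAt (s : ℝ) : HasDerivAt ZAux (Real.exp s + 1) s :=
  ((Real.hasDerivAt_exp s).add (hasDerivAt_id s)).sub_const 1

lemma ZAux_analytic (s : ℝ) : AnalyticAt ℝ ZAux s := by
  unfold ZAux
  fun_prop

lemma ZAux_ge {s : ℝ} : 2 * s ≤ ZAux s := by
  have := Real.add_one_le_exp s
  unfold ZAux
  linarith

lemma zOf_exp (s : ℝ) : zOf (Real.exp (s - 1)) = ZAux s := by
  unfold zOf ZAux
  rw [Real.log_exp, ← Real.exp_add]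
  ring_nf

/-- `e ε` as a function of `s = log β + 1`. -/
noncomputable def GAux (s : ℝ) : ℝ := Real.exp s - 1 - s + s ^ 2 / 2

lemma GAux_hasDerivAt (s : ℝ) : HasDerivAt GAux (ZAux s) s := by
  have h := (((Real.hasDerivAt_exp s).sub_const 1).sub (hasDerivAt_id s)).add
    (((hasDerivAt_id s).pow 2).div_const 2)
  refine h.congr_deriv ?_
  simp [ZAux]
  ring

lemma GAux_strictMonoOn : StrictMonoOn GAux (Ici 0) := by
  apply strictMonoOn_of_deriv_pos (convex_Ici 0)
  · exact fun x _ => (GAux_hasDerivAt x).continuousAt.continuousWithinAt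
  · intro x hx
    rw [interior_Ici] at hx
    rw [(GAux_hasDerivAt x).deriv]
    have := @ZAux_ge x
    have hx' : 0 < x := hx
    linarith

lemma GAux_ge (s : ℝ) : s ^ 2 / 2 ≤ GAux s := by
  have := Real.add_one_le_exp s
  unfold GAux
  linarith

lemma GAux_le {s : ℝ} (hs : 0 ≤ s) (h1 : s ≤ 1) : GAux s ≤ 3 / 2 * s ^ 2 := by
  have := Real.abs_exp_sub_one_sub_id_le (x := s) (by rw [abs_of_nonneg hs]; exact h1)
  have := (abs_le.1 this).2
  unfold GAux
  linarith

noncomputable def sAux (B : ℝ → ℝ) (ε : ℝ) : ℝ := Real.log (B ε) + 1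

section
variable (B : ℝ → ℝ)

lemma B_eq (hB : ∀ ε : ℝ, 0 < ε →
      (Real.exp 1)⁻¹ < B ε ∧
        1 - B ε - 1 / (2 * Real.exp 1) * (Real.log (B ε)) ^ 2
          = 1 - 3 / (2 * Real.exp 1) - ε) {ε : ℝ} (h : 0 < ε) :
    B ε = Real.exp (sAux B ε - 1) ∧ 0 < sAux B ε ∧ GAux (sAux B ε) = Real.exp 1 * ε := by
  obtain ⟨h1, h2⟩ := hB ε h
  have hpos : 0 < B ε := lt_trans (by positivity) h1
  have e1 : B ε = Real.exp (sAux B ε - 1) := by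
    simp [sAux, Real.exp_log hpos]
  refine ⟨e1, ?_, ?_⟩
  · have := Real.log_lt_log (by positivity) h1
    rw [Real.log_inv, Real.log_exp] at this
    unfold sAux
    linarith
  · have hl : Real.log (B ε) = sAux B ε - 1 := by simp [sAux]
    have e2 : Real.exp (sAux B ε) = Real.exp 1 * B ε := by
      conv_rhs => rw [e1, ← Real.exp_add]
      ring_nf
    rw [hl] at h2
    unfold GAux
    rw [e2]
    have he := Real.exp_pos 1
    field_simp at h2
    linarith

lemma sAux_hasDerivAt (hB : ∀ ε : ℝ, 0 < ε →
      (Real.exp 1)⁻¹ < B ε ∧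
        1 - B ε - 1 / (2 * Real.exp 1) * (Real.log (B ε)) ^ 2
          = 1 - 3 / (2 * Real.exp 1) - ε) {ε : ℝ} (h : 0 < ε) :
    HasDerivAt (sAux B) (Real.exp 1 / ZAux (sAux B ε)) ε := by
  have he := Real.exp_pos 1
  have hs := fun (x : ℝ) (hx : 0 < x) => B_eq B hB hx
  have hmono : MonotoneOn (sAux B) (Ioi 0) := by
    intro x hx y hy hxy
    refine (GAux_strictMonoOn.le_iff_le (hs x hx).2.1.le (hs y hy).2.1.le).1 ?_
    rw [(hs x hx).2.2, (hs y hy).2.2]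
    gcongr
  have hsurj : Ioi 0 ⊆ sAux B '' Ioi 0 := by
    intro t ht
    have ht' : (0 : ℝ) < t := ht
    have hG : 0 < GAux t := lt_of_lt_of_le (by positivity) (GAux_ge t)
    have hx : 0 < GAux t / Real.exp 1 := by positivity
    refine ⟨GAux t / Real.exp 1, hx, ?_⟩
    refine GAux_strictMonoOn.injOn (hs _ hx).2.1.le ht'.le ?_
    rw [(hs _ hx).2.2]
    field_simp
  have hcont : ContinuousAt (sAux B) ε :=
    continuousAt_of_monotoneOn_of_image_mem_nhds hmono (Ioi_mem_nhds h)
      (mem_of_superset (Ioi_mem_nhds (hs ε h).2.1) hsurj)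
  have hZ : 0 < ZAux (sAux B ε) := by
    have := @ZAux_ge (sAux B ε)
    linarith [(hs ε h).2.1]
  have hG : HasDerivAt (fun s => GAux s / Real.exp 1) (ZAux (sAux B ε) / Real.exp 1)
      (sAux B ε) := (GAux_hasDerivAt _).div_const _
  have := hG.of_local_left_inverse hcont (by positivity) (by
    filter_upwards [Ioi_mem_nhds h] with y hy
    rw [(hs y hy).2.2]
    field_simp)
  refine this.congr_deriv ?_
  rw [inv_div]

lemma key (hB : ∀ ε : ℝ, 0 < ε →
      (Real.exp 1)⁻¹ < B ε ∧
        1 - B ε - 1 / (2 * Real.exp 1) * (Real.log (B ε)) ^ 2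
          = 1 - 3 / (2 * Real.exp 1) - ε) (F g : ℝ → ℝ) (hg : ∀ s, AnalyticAt ℝ g s)
    (hF : ∀ s, HasDerivAt (fun s => F (Real.exp (s - 1))) (ZAux s / Real.exp 1 * g s) s)
    {ε : ℝ} (h : 0 < ε) :
    DifferentiableAt ℝ (fun u => F (B u)) ε ∧
      HasDerivAt (deriv fun u => F (B u))
        (deriv g (sAux B ε) * (Real.exp 1 / ZAux (sAux B ε))) ε := by
  have h1 : ∀ x, 0 < x → HasDerivAt (fun u => F (B u)) (g (sAux B x)) x := by
    intro x hx
    have hZ : 0 < ZAux (sAux B x) := by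
      have := @ZAux_ge (sAux B x)
      linarith [(B_eq B hB hx).2.1]
    have hc := (hF (sAux B x)).comp x (sAux_hasDerivAt B hB hx)
    have he := Real.exp_pos 1
    refine (hc.congr_deriv (by field_simp)).congr_of_eventuallyEq ?_
    filter_upwards [Ioi_mem_nhds hx] with y hy
    simp only [Function.comp]
    rw [← (B_eq B hB hy).1]
  refine ⟨(h1 ε h).differentiableAt, ?_⟩
  have h2 := (hg (sAux B ε)).differentiableAt.hasDerivAt.comp ε (sAux_hasDerivAt B hB h)
  refine h2.congr_of_eventuallyEq ?_
  filter_upwards [Ioi_mem_nhds h] with y hy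
  exact (h1 y hy).deriv

lemma sAux_tendsto (hB : ∀ ε : ℝ, 0 < ε →
      (Real.exp 1)⁻¹ < B ε ∧
        1 - B ε - 1 / (2 * Real.exp 1) * (Real.log (B ε)) ^ 2
          = 1 - 3 / (2 * Real.exp 1) - ε) :
    Tendsto (sAux B) (𝓝[>] 0) (𝓝 0) := by
  have h1 : Tendsto (fun ε : ℝ => Real.sqrt (2 * (Real.exp 1 * ε))) (𝓝[>] 0) (𝓝 0) := by
    have : Continuous (fun ε : ℝ => Real.sqrt (2 * (Real.exp 1 * ε))) := by fun_prop
    have := (this.tendsto 0).mono_left (nhdsWithin_le_nhds (s := Ioi 0))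
    simpa using this
  refine tendsto_of_tendsto_of_tendsto_of_le_of_le' tendsto_const_nhds h1 ?_ ?_
  · filter_upwards [self_mem_nhdsWithin] with x hx
    exact (B_eq B hB hx).2.1.le
  · filter_upwards [self_mem_nhdsWithin] with x hx
    apply Real.le_sqrt_of_sq_le
    have := GAux_ge (sAux B x)
    rw [(B_eq B hB hx).2.2] at this
    linarith

lemma key_sqrt (hB : ∀ ε : ℝ, 0 < ε →
      (Real.exp 1)⁻¹ < B ε ∧
        1 - B ε - 1 / (2 * Real.exp 1) * (Real.log (B ε)) ^ 2
          = 1 - 3 / (2 * Real.exp 1) - ε) (F g : ℝ → ℝ) (hg : ∀ s, AnalyticAt ℝ g s)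
    (hF : ∀ s, HasDerivAt (fun s => F (Real.exp (s - 1))) (ZAux s / Real.exp 1 * g s) s) :
    (deriv (deriv fun u : ℝ => F (B u)))
        =O[𝓝[>] (0 : ℝ)] (fun ε : ℝ => (Real.sqrt ε)⁻¹) := by
  have h1 : (fun ε => deriv g (sAux B ε)) =O[𝓝[>] (0 : ℝ)] (fun _ => (1 : ℝ)) :=
    ((hg 0).deriv.continuousAt.tendsto.comp (sAux_tendsto B hB)).isBigO_one ℝ
  have h2 : (fun ε => Real.exp 1 / ZAux (sAux B ε)) =O[𝓝[>] (0 : ℝ)]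
      (fun ε : ℝ => (Real.sqrt ε)⁻¹) := by
    refine IsBigO.of_bound (Real.exp 1) ?_
    have hlt : ∀ᶠ ε in 𝓝[>] (0 : ℝ), sAux B ε < 1 :=
      (sAux_tendsto B hB).eventually (gt_mem_nhds one_pos)
    filter_upwards [self_mem_nhdsWithin, hlt] with x hx hx1
    have hx' : 0 < x := hx
    obtain ⟨-, hs, hG⟩ := B_eq B hB hx'
    have hZ := @ZAux_ge (sAux B x)
    have hZ0 : 0 < ZAux (sAux B x) := by linarith
    have he : (2 : ℝ) ≤ Real.exp 1 := by
      have := Real.add_one_le_exp (1 : ℝ)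
      linarith
    have hsq : Real.sqrt x ≤ sAux B x := by
      apply Real.sqrt_le_iff.2 ⟨hs.le, ?_⟩
      have := GAux_le hs.le hx1.le
      rw [hG] at this
      nlinarith [sq_nonneg (sAux B x)]
    have hsx : 0 < Real.sqrt x := Real.sqrt_pos.2 hx'
    rw [Real.norm_of_nonneg (by positivity), Real.norm_of_nonneg (by positivity), div_eq_mul_inv]
    gcongr
    linarith
  refine ((h1.mul h2).congr' ?_ (by simp))
  filter_upwards [self_mem_nhdsWithin] with x hx
  exact (key B hB F g hg hF hx).2.deriv.symm

lemma key_one (hB : ∀ ε : ℝ, 0 < ε →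
      (Real.exp 1)⁻¹ < B ε ∧
        1 - B ε - 1 / (2 * Real.exp 1) * (Real.log (B ε)) ^ 2
          = 1 - 3 / (2 * Real.exp 1) - ε) (F g : ℝ → ℝ) (hg : ∀ s, AnalyticAt ℝ g s)
    (hF : ∀ s, HasDerivAt (fun s => F (Real.exp (s - 1))) (ZAux s / Real.exp 1 * g s) s)
    (h0 : deriv g 0 = 0) :
    (deriv (deriv fun u : ℝ => F (B u)))
        =O[𝓝[>] (0 : ℝ)] (fun _ : ℝ => (1 : ℝ)) := by
  have h1 : (fun ε => deriv g (sAux B ε)) =O[𝓝[>] (0 : ℝ)] (fun ε => sAux B ε) := by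
    have := (hg 0).deriv.differentiableAt.isBigO_sub
    simp only [h0, sub_zero] at this
    exact this.comp_tendsto (sAux_tendsto B hB)
  have h2 : (fun ε => Real.exp 1 / ZAux (sAux B ε)) =O[𝓝[>] (0 : ℝ)]
      (fun ε : ℝ => (sAux B ε)⁻¹) := by
    refine IsBigO.of_bound (Real.exp 1) ?_
    filter_upwards [self_mem_nhdsWithin] with x hx
    obtain ⟨-, hs, hG⟩ := B_eq B hB hx
    have hZ := @ZAux_ge (sAux B x)
    have hZ0 : 0 < ZAux (sAux B x) := by linarith
    rw [Real.norm_of_nonneg (by positivity), Real.norm_of_nonneg (by positivity), div_eq_mul_inv]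
    gcongr
    linarith
  refine ((h1.mul h2).congr' ?_ ?_)
  · filter_upwards [self_mem_nhdsWithin] with x hx
    exact (key B hB F g hg hF hx).2.deriv.symm
  · filter_upwards [self_mem_nhdsWithin] with x hx
    exact mul_inv_cancel₀ (B_eq B hB hx).2.1.ne'

end

noncomputable def gX (s : ℝ) : ℝ :=
  2 * (Real.exp s + 1) - Real.exp s * (1 - Real.exp (-ZAux s))
    - Real.exp s * Real.exp (-ZAux s) * (Real.exp s + 1)
    - (Real.exp s + 1) * Real.exp s * hAux (ZAux s)

noncomputable def gV (s : ℝ) : ℝ :=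
  Real.exp s * (hAux (ZAux s) + Real.exp (-ZAux s) * Real.exp s)

noncomputable def gS (s : ℝ) : ℝ :=
  Real.exp s * (1 + Real.exp (-ZAux s) - 2 * hAux (ZAux s)
    + (Real.exp s + 1) * (hAux (ZAux s) - Real.exp (-ZAux s)))

lemma hZ_analytic (s : ℝ) : AnalyticAt ℝ (fun s => hAux (ZAux s)) s :=
  (hAux_analytic _).comp (ZAux_analytic s)

lemma gX_analytic (s : ℝ) : AnalyticAt ℝ gX s := by
  have h1 := hZ_analytic s
  have h2 := ZAux_analytic s
  unfold gX
  fun_prop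

lemma gV_analytic (s : ℝ) : AnalyticAt ℝ gV s := by
  have h1 := hZ_analytic s
  have h2 := ZAux_analytic s
  unfold gV
  fun_prop

lemma gS_analytic (s : ℝ) : AnalyticAt ℝ gS s := by
  have h1 := hZ_analytic s
  have h2 := ZAux_analytic s
  unfold gS
  fun_prop

lemma exp_sub_one_eq (s : ℝ) : Real.exp (s - 1) = Real.exp s / Real.exp 1 := Real.exp_sub s 1

lemma hasDerivAt_expZ (s : ℝ) : HasDerivAt (fun s => Real.exp (-ZAux s))
    (Real.exp (-ZAux s) * (-(Real.exp s + 1))) s := (ZAux_hasDerivAt s).neg.exp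

lemma deriv_gX_zero : deriv gX 0 = 0 := by
  have hE := Real.hasDerivAt_exp 0
  have hQ := hasDerivAt_expZ 0
  have hZ0 : ZAux 0 = 0 := by simp [ZAux]
  have hh : HasDerivAt (fun s => hAux (ZAux s)) (deriv hAux (ZAux 0) * (Real.exp 0 + 1)) 0 :=
    (hAux_analytic _).differentiableAt.hasDerivAt.comp 0 (ZAux_hasDerivAt 0)
  have hE1 := hE.add_const 1
  have := (((hE1.const_mul 2).sub (hE.mul (hQ.const_sub 1))).sub ((hE.mul hQ).mul hE1)).sub
    ((hE1.mul hE).mul hh)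
  have h2 : HasDerivAt gX _ 0 := this
  rw [h2.deriv]
  simp only [Pi.mul_apply, hZ0, deriv_hAux_zero, hAux_zero, Real.exp_zero, neg_zero]
  norm_num

lemma X_deriv (s : ℝ) : HasDerivAt (fun s => XFluid (Real.exp (s - 1)))
    (ZAux s / Real.exp 1 * gX s) s := by
  have hE := Real.hasDerivAt_exp s
  have hQ := hasDerivAt_expZ s
  have hZ := ZAux_hasDerivAt s
  have e : (fun s => XFluid (Real.exp (s - 1))) = fun s => (Real.exp 1)⁻¹ * (ZAux s) ^ 2
      - ZAux s * (Real.exp s / Real.exp 1) * (1 - Real.exp (-ZAux s)) := by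
    funext s
    simp only [XFluid, zOf_exp]
    simp only [exp_sub_one_eq]
  rw [e]
  refine (((hZ.pow 2).const_mul (Real.exp 1)⁻¹).sub
    ((hZ.mul (hE.div_const (Real.exp 1))).mul (hQ.const_sub 1))).congr_deriv ?_
  have hm := hAux_mul (ZAux s)
  have he := Real.exp_pos 1
  simp only [gX, Pi.mul_apply]
  field_simp
  push_cast
  linear_combination (Real.exp s + 1) * Real.exp s * hm

lemma V_deriv (s : ℝ) : HasDerivAt (fun s => VFluid (Real.exp (s - 1)))
    (ZAux s / Real.exp 1 * gV s) s := by
  have hE := Real.hasDerivAt_exp s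
  have hQ := hasDerivAt_expZ s
  have hZ := ZAux_hasDerivAt s
  have e : (fun s => VFluid (Real.exp (s - 1))) = fun s => (Real.exp s / Real.exp 1)
      * (1 - (ZAux s + 1) * Real.exp (-ZAux s)) := by
    funext s
    simp only [VFluid, zOf_exp]
    simp only [exp_sub_one_eq]
    have : Real.exp (-ZAux s) * Real.exp (ZAux s) = 1 := by
      rw [← Real.exp_add]
      simp
    linear_combination Real.exp s / Real.exp 1 * this
  rw [e]
  refine ((hE.div_const (Real.exp 1)).mul
    (((hZ.add_const 1).mul hQ).const_sub 1)).congr_deriv ?_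
  have hm := hAux_mul (ZAux s)
  have he := Real.exp_pos 1
  simp only [gV, Pi.mul_apply]
  field_simp
  linear_combination -hm

lemma S_deriv (s : ℝ) : HasDerivAt (fun s => SFluid (Real.exp (s - 1)))
    (ZAux s / Real.exp 1 * gS s) s := by
  have hE := Real.hasDerivAt_exp s
  have hQ := hasDerivAt_expZ s
  have hZ := ZAux_hasDerivAt s
  have e : (fun s => SFluid (Real.exp (s - 1))) = fun s => (Real.exp s / Real.exp 1)
      * (ZAux s + ZAux s * Real.exp (-ZAux s) + 2 * Real.exp (-ZAux s) - 2) := by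
    funext s
    simp only [SFluid, zOf_exp]
    simp only [exp_sub_one_eq]
  rw [e]
  refine ((hE.div_const (Real.exp 1)).mul
    (((hZ.add (hZ.mul hQ)).add (hQ.const_mul 2)).sub_const 2)).congr_deriv ?_
  have hm := hAux_mul (ZAux s)
  have he := Real.exp_pos 1
  simp only [gS, Pi.mul_apply, Pi.add_apply]
  field_simp
  linear_combination (2 - (Real.exp s + 1)) * hm

/-- For `ε > 0` let `B ε` be the unique `β > e⁻¹` with
`1 - β - (1/(2e)) (log β)² = 1 - 3/(2e) - ε`. Then there is `ε₀ > 0` such that the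
maps `ε ↦ 𝒳(B ε)`, `ε ↦ 𝒱(B ε)`, `ε ↦ 𝒮(B ε)` are twice differentiable on `(0, ε₀)`,
the second derivative of `ε ↦ 𝒳(B ε)` is `O(1)` as `ε → 0⁺`, and the second
derivatives of `ε ↦ 𝒱(B ε)` and `ε ↦ 𝒮(B ε)` are `O(ε^{-1/2})` as `ε → 0⁺`. -/
theorem karpSipser_fluid_second_derivative_bounds (B : ℝ → ℝ)
    (hB : ∀ ε : ℝ, 0 < ε →
      (Real.exp 1)⁻¹ < B ε ∧
        1 - B ε - 1 / (2 * Real.exp 1) * (Real.log (B ε)) ^ 2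
          = 1 - 3 / (2 * Real.exp 1) - ε) :
    ∃ ε₀ : ℝ, 0 < ε₀ ∧
      (∀ ε ∈ Set.Ioo (0 : ℝ) ε₀,
        (DifferentiableAt ℝ (fun u : ℝ => XFluid (B u)) ε ∧
          DifferentiableAt ℝ (deriv fun u : ℝ => XFluid (B u)) ε) ∧
        (DifferentiableAt ℝ (fun u : ℝ => VFluid (B u)) ε ∧
          DifferentiableAt ℝ (deriv fun u : ℝ => VFluid (B u)) ε) ∧
        (DifferentiableAt ℝ (fun u : ℝ => SFluid (B u)) ε ∧
          DifferentiableAt ℝ (deriv fun u : ℝ => SFluid (B u)) ε)) ∧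
      (deriv (deriv fun u : ℝ => XFluid (B u)))
        =O[𝓝[>] (0 : ℝ)] (fun _ : ℝ => (1 : ℝ)) ∧
      (deriv (deriv fun u : ℝ => VFluid (B u)))
        =O[𝓝[>] (0 : ℝ)] (fun ε : ℝ => (Real.sqrt ε)⁻¹) ∧
      (deriv (deriv fun u : ℝ => SFluid (B u)))
        =O[𝓝[>] (0 : ℝ)] (fun ε : ℝ => (Real.sqrt ε)⁻¹) := by
  refine ⟨1, one_pos, ?_, key_one B hB _ _ gX_analytic X_deriv deriv_gX_zero,
    key_sqrt B hB _ _ gV_analytic V_deriv, key_sqrt B hB _ _ gS_analytic S_deriv⟩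
  intro ε hε
  have hX := key B hB _ _ gX_analytic X_deriv hε.1
  have hV := key B hB _ _ gV_analytic V_deriv hε.1
  have hS := key B hB _ _ gS_analytic S_deriv hε.1
  exact ⟨⟨hX.1, hX.2.differentiableAt⟩, ⟨hV.1, hV.2.differentiableAt⟩,
    ⟨hS.1, hS.2.differentiableAt⟩⟩
end

section
/- Define f(z) = exp(z) − z − 1 and, for x, v, s, z with x + 2v + s > 0 and z > 0, define Ψ_A(x, v, s, z) = −1 − x/(x+2v+s) + v²·z⁴·exp(z)/((x+2v+s)²·f(z)²) − x·v·z²·exp(z)/((x+2v+s)²·f(z)). For ε > 0 let β(ε) be the unique β > e^{−1} with 1 − β − (1/(2e))·(log β)² = 1 − 3/(2e) − ε, and set z_ε = e·β(ε) + log β(ε), x_ε = e^{−1}·z_ε² − z_ε·β(ε)·(1 − exp(−z_ε)), v_ε = β(ε)·exp(−z_ε)·(exp(z_ε) − z_ε − 1), s_ε = β(ε)·(z_ε + z_ε·exp(−z_ε) + 2·exp(−z_ε) − 2). Then the partial derivative of Ψ_A with respect to its first variable x, evaluated at (x_ε, v_ε, s_ε, z_ε), equals −ε^{−1} + O(ε^{−1/2})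 as ε → 0+. -/
open Real Filter Set Topology Asymptotics

noncomputable def fKS (z : ℝ) : ℝ := Real.exp z - z - 1

/-- The drift function `Φ_A` of the leaf count, written with `z` as a separate
(fourth) variable. -/
noncomputable def PsiA (x v s z : ℝ) : ℝ :=
  -1 - x / (x + 2 * v + s)
    + v ^ 2 * z ^ 4 * Real.exp z / ((x + 2 * v + s) ^ 2 * (fKS z) ^ 2)
    - x * v * z ^ 2 * Real.exp z / ((x + 2 * v + s) ^ 2 * fKS z)

lemma KS_hasDeriv (x v s z : ℝ) (hN : x + 2 * v + s ≠ 0) (hf : fKS z ≠ 0) :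
    HasDerivAt (fun x : ℝ => PsiA x v s z)
      (-(1 / (x + 2 * v + s)) + x / (x + 2 * v + s) ^ 2
        - 2 * ((v / fKS z) ^ 2 * z ^ 4 * Real.exp z) / (x + 2 * v + s) ^ 3
        - ((v / fKS z) * z ^ 2 * Real.exp z) / (x + 2 * v + s) ^ 2
        + 2 * x * ((v / fKS z) * z ^ 2 * Real.exp z) / (x + 2 * v + s) ^ 3) x := by
  have hid : HasDerivAt (fun x : ℝ => x) 1 x := hasDerivAt_id x
  have hNd : HasDerivAt (fun x : ℝ => x + 2 * v + s) 1 x :=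
    (hid.add_const (2 * v)).add_const s
  have h1 := hid.div hNd hN
  have hN2 := hNd.pow 2
  have h2 := (hasDerivAt_const x (v ^ 2 * z ^ 4 * Real.exp z)).div (hN2.mul_const ((fKS z) ^ 2))
    (mul_ne_zero (pow_ne_zero 2 hN) (pow_ne_zero 2 hf))
  have h3 := (((hid.mul_const v).mul_const (z ^ 2)).mul_const (Real.exp z)).div
    (hN2.mul_const (fKS z)) (mul_ne_zero (pow_ne_zero 2 hN) hf)
  have h := ((h1.const_sub (-1)).add h2).sub h3
  refine (h.congr_deriv ?_)
  simp only [Pi.pow_apply]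
  generalize x + 2 * v + s = N at *
  field_simp
  ring

lemma KS_D (β : ℝ) (hβ : 0 < β) (hz : 0 < zOf β) :
    deriv (fun x : ℝ => PsiA x (VFluid β) (SFluid β) (zOf β)) (XFluid β)
      = Real.exp 1 / (zOf β) ^ 2 * (Real.exp 1 * β
          - 2 * (Real.exp 1 * β) ^ 2 * Real.exp (-(zOf β))
          - (Real.exp 1 * β + 2 * (Real.exp 1 * β) ^ 2)
            * ((1 - Real.exp (-(zOf β))) / zOf β)) := by
  have he := Real.exp_pos 1
  have hf : 0 < fKS (zOf β) := by
    unfold fKS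
    have := Real.add_one_lt_exp hz.ne'
    linarith
  have hN : XFluid β + 2 * VFluid β + SFluid β = (zOf β) ^ 2 / Real.exp 1 := by
    have hq : Real.exp (-(zOf β)) * Real.exp (zOf β) = 1 := by
      rw [← Real.exp_add]; simp
    unfold XFluid VFluid SFluid
    have : β * Real.exp (-(zOf β)) * (Real.exp (zOf β) - zOf β - 1)
      = β * (1 - Real.exp (-(zOf β)) * (zOf β + 1)) := by
      linear_combination β * hq
    rw [this]
    field_simp
    ring
  have hv : VFluid β / fKS (zOf β) = β * Real.exp (-(zOf β)) := by
    rw [div_eq_iff hf.ne']; rfl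
  rw [(KS_hasDeriv _ _ _ _ (by rw [hN]; positivity) hf.ne').deriv, hN, hv]
  unfold XFluid
  generalize zOf β = z at *
  rw [Real.exp_neg]
  have hE := Real.exp_pos z
  field_simp
  ring

lemma KS_bound (u b z q r a : ℝ) (hu : 0 < u) (hu1 : u ≤ 1) (ha : 0 < a)
    (hb1 : 1 ≤ b) (hb2 : b ≤ 1 + 2 * u) (hz1 : 2 * u ≤ z) (hz2 : z ≤ 2 * u + u ^ 2)
    (hq1 : 1 - z ≤ q) (hq2 : q ≤ 1) (hq0 : 0 ≤ q) (hr0 : 0 ≤ r)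
    (hr1 : 1 - z ≤ r) (hr2 : r ≤ 1) (t : ℝ) (ht1 : u ^ 2 ≤ t) (ht2 : t ≤ u ^ 2 + u ^ 3) :
    |a / z ^ 2 * (b - 2 * b ^ 2 * q - (b + 2 * b ^ 2) * r) + a / t| ≤ 11 * a / u := by
  have hz3 : z ≤ 3 * u := by nlinarith
  have hbb : b ^ 2 ≤ 1 + 8 * u := by nlinarith
  have hbb1 : 1 ≤ b ^ 2 := by nlinarith
  have hz0 : 0 < z := by linarith
  have ht0 : 0 < t := by nlinarith [pow_pos hu 2]
  set G := b - 2 * b ^ 2 * q - (b + 2 * b ^ 2) * r with hG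
  have hGu : |G + 4| ≤ 34 * u := by
    rw [abs_le]
    constructor
    · have h1 : b ^ 2 * q ≤ b ^ 2 := by nlinarith
      have h2 : (b + 2 * b ^ 2) * r ≤ b + 2 * b ^ 2 := by nlinarith
      nlinarith
    · have h1 : q ≤ b ^ 2 * q := by nlinarith
      have h2 : 3 * r ≤ (b + 2 * b ^ 2) * r := by nlinarith
      nlinarith
  have hzz : 4 * u ^ 2 ≤ z ^ 2 := by nlinarith
  have e1 : |a / z ^ 2 * (G + 4)| ≤ 34 / 4 * (a / u) := by
    rw [abs_mul, abs_of_pos (by positivity : 0 < a / z ^ 2)]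
    calc a / z ^ 2 * |G + 4| ≤ a / (4 * u ^ 2) * (34 * u) := by gcongr
      _ = _ := by field_simp
  have e2 : |a / u ^ 2 - 4 * (a / z ^ 2)| ≤ 5 / 4 * (a / u) := by
    have : a / u ^ 2 - 4 * (a / z ^ 2) = a * (z ^ 2 - 4 * u ^ 2) / (u ^ 2 * z ^ 2) := by
      field_simp
    rw [this, abs_of_nonneg (div_nonneg (mul_nonneg ha.le (by linarith)) (by positivity))]
    have h5 : z ^ 2 - 4 * u ^ 2 ≤ 5 * u ^ 3 := by
      have : z ^ 2 ≤ (2 * u + u ^ 2) ^ 2 := by gcongr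
      nlinarith [pow_pos hu 3]
    calc a * (z ^ 2 - 4 * u ^ 2) / (u ^ 2 * z ^ 2)
        ≤ a * (5 * u ^ 3) / (u ^ 2 * (4 * u ^ 2)) := by gcongr
      _ = _ := by field_simp
  have e3 : |a / t - a / u ^ 2| ≤ a / u := by
    have : a / t - a / u ^ 2 = -(a * (t - u ^ 2) / (t * u ^ 2)) := by
      field_simp; ring
    rw [this, abs_neg, abs_of_nonneg
      (div_nonneg (mul_nonneg ha.le (by linarith)) (by positivity))]
    calc a * (t - u ^ 2) / (t * u ^ 2) ≤ a * (u ^ 3) / (u ^ 2 * u ^ 2) := by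
          gcongr; linarith
      _ = _ := by field_simp
  have hau : 0 < a / u := by positivity
  have : a / z ^ 2 * G + a / t = a / z ^ 2 * (G + 4) + (a / u ^ 2 - 4 * (a / z ^ 2))
      + (a / t - a / u ^ 2) := by ring
  rw [this, mul_div_assoc]
  rw [abs_le] at *
  constructor <;> linarith [e1.1, e1.2, e2.1, e2.2, e3.1, e3.2]

/-- For `ε > 0` let `B ε` be the unique `β > e⁻¹` with
`1 - β - (1/(2e)) (log β)² = 1 - 3/(2e) - ε`, and set `z_ε = zOf (B ε)`,
`x_ε = 𝒳(B ε)`, `v_ε = 𝒱(B ε)`, `s_ε = 𝒮(B ε)`. Then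
`∂Ψ_A/∂x (x_ε, v_ε, s_ε, z_ε) = -ε⁻¹ + O(ε^{-1/2})` as `ε → 0⁺`. -/
theorem karpSipser_drift_restoring_force (B : ℝ → ℝ)
    (hB : ∀ ε : ℝ, 0 < ε →
      (Real.exp 1)⁻¹ < B ε ∧
        1 - B ε - 1 / (2 * Real.exp 1) * (Real.log (B ε)) ^ 2
          = 1 - 3 / (2 * Real.exp 1) - ε) :
    (fun ε : ℝ =>
        deriv (fun x : ℝ => PsiA x (VFluid (B ε)) (SFluid (B ε)) (zOf (B ε)))
            (XFluid (B ε))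
          + ε⁻¹)
      =O[𝓝[>] (0 : ℝ)] (fun ε : ℝ => (Real.sqrt ε)⁻¹) := by
  have ev1 : ∀ᶠ ε : ℝ in 𝓝[>] (0 : ℝ), ε < (Real.exp 1)⁻¹ :=
    nhdsWithin_le_nhds (Iio_mem_nhds (by positivity))
  refine IsBigO.of_bound (11 * Real.exp 1) ?_
  filter_upwards [ev1, self_mem_nhdsWithin] with ε hε1 hε
  have hε : 0 < ε := hε
  obtain ⟨h1, h2⟩ := hB ε hε
  generalize B ε = β at h1 h2 ⊢
  have he := Real.exp_pos 1
  have hβ : 0 < β := lt_trans (by positivity) h1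
  obtain ⟨u, hu⟩ : ∃ u, u = 1 + Real.log β := ⟨_, rfl⟩
  have hb : Real.exp 1 * β = Real.exp u := by
    rw [hu, Real.exp_add, Real.exp_log hβ]
  have hL : Real.log β = u - 1 := by linarith
  have hu0 : 0 < u := by
    have : Real.log (Real.exp 1)⁻¹ < Real.log β := Real.log_lt_log (by positivity) h1
    rw [Real.log_inv, Real.log_exp] at this
    linarith
  have ht : Real.exp 1 * ε = Real.exp u - 1 - u + u ^ 2 / 2 := by
    rw [← hb]
    rw [hL] at h2
    field_simp at h2
    linarith
  have hquad := Real.quadratic_le_exp_of_nonneg hu0.le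
  have hε2 : Real.exp 1 * ε < 1 := by
    calc Real.exp 1 * ε < Real.exp 1 * (Real.exp 1)⁻¹ := by gcongr
      _ = 1 := mul_inv_cancel₀ he.ne'
  have hu1 : u ≤ 1 := by nlinarith
  have hub : Real.exp u ≤ 1 + u + u ^ 2 / 2 + u ^ 3 := by
    have := Real.exp_bound' hu0.le hu1 (n := 3) (by norm_num)
    norm_num [Finset.sum_range_succ, Nat.factorial] at this
    nlinarith [pow_pos hu0 3]
  have hub2 : Real.exp u ≤ 1 + u + u ^ 2 := by
    have := Real.exp_bound' hu0.le hu1 (n := 2) (by norm_num)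
    norm_num [Finset.sum_range_succ, Nat.factorial] at this
    nlinarith [pow_pos hu0 2]
  have hzu : zOf β = Real.exp u + u - 1 := by
    unfold zOf; rw [hb, hL]; ring
  have hz0 : 0 < zOf β := by rw [hzu]; nlinarith
  rw [KS_D β hβ hz0, hb]
  have hz1 : 2 * u ≤ zOf β := by rw [hzu]; nlinarith
  have hz2 : zOf β ≤ 2 * u + u ^ 2 := by rw [hzu]; nlinarith
  generalize zOf β = z at *
  have hq1 : 1 - z ≤ Real.exp (-z) := by have := Real.add_one_le_exp (-z); linarith
  have hq2 : Real.exp (-z) ≤ 1 := Real.exp_le_one_iff.2 (by linarith)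
  have hr1 : 1 - z ≤ (1 - Real.exp (-z)) / z := by
    rw [le_div_iff₀ hz0]
    have h3 : Real.exp (-z) * (1 + z) ≤ 1 := by
      have h4 : Real.exp (-z) * Real.exp z = 1 := by rw [← Real.exp_add]; simp
      have := Real.add_one_le_exp z
      nlinarith [Real.exp_pos (-z)]
    nlinarith [Real.exp_pos (-z), pow_pos hz0 3]
  have hr2 : (1 - Real.exp (-z)) / z ≤ 1 := by
    rw [div_le_one hz0]; linarith
  have hmain := KS_bound u (Real.exp u) z (Real.exp (-z)) ((1 - Real.exp (-z)) / z) (Real.exp 1)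
    hu0 hu1 he (by nlinarith) (by nlinarith) hz1 hz2 hq1 hq2 (Real.exp_pos _).le
    (div_nonneg (by linarith) hz0.le) hr1 hr2 (Real.exp 1 * ε) (by nlinarith) (by nlinarith)
  have hinv : Real.exp 1 / (Real.exp 1 * ε) = ε⁻¹ := by field_simp
  rw [hinv] at hmain
  rw [Real.norm_eq_abs, Real.norm_eq_abs, abs_of_nonneg (a := (√ε)⁻¹) (by positivity)]
  refine hmain.trans ?_
  rw [div_eq_mul_inv]
  have he2 : 2 ≤ Real.exp 1 := by have := Real.add_one_le_exp (1:ℝ); linarith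
  have hεu : ε ≤ u ^ 2 := by
    have : u ^ 3 ≤ u ^ 2 := by nlinarith [pow_pos hu0 2]
    nlinarith
  have hsq : √ε ≤ u := Real.sqrt_le_iff.2 ⟨hu0.le, hεu⟩
  have hs0 : 0 < √ε := Real.sqrt_pos.2 hε
  gcongr
end
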